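/- Let D be a dictionary in a real Hilbert space X whose symmetric convex hull co(D) is compact, let θ ∈ (0,1), and let f ∈ X with ‖f‖_θ < ∞. Then any sequence (f_n) produced by the orthogonal greedy algorithm with target f satisfies ‖f − f_n‖ ≤ 2^θ ((n! V_n)^{θ/n} / n^{θ/2}) · ‖f‖_θ · ε_n(co(D))^θ for all n ≥ 1. -/

import Mathlib

open scoped RealInnerProductSpace

/-- Dyadic entropy number: infimum of all `ε > 0` such that `K` is covered by `2^n`
balls of radius `ε`. -/
noncomputable def entropyNumber {X : Type*} [NormedAddCommGroup X] (n : ℕ) (K : Set X) : ℝ :=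
  sInf {ε : ℝ | 0 < ε ∧ ∃ c : Fin (2 ^ n) → X, K ⊆ ⋃ i, Metric.closedBall (c i) ε}

/-- Symmetric (absolutely) convex hull: closure of the set of finite sums `∑ cᵢ gᵢ`
with `gᵢ ∈ K` and `∑ |cᵢ| ≤ 1`. -/
noncomputable def symConvexHull {X : Type*} [NormedAddCommGroup X] [NormedSpace ℝ X]
    (K : Set X) : Set X :=
  closure {x : X | ∃ (m : ℕ) (c : Fin m → ℝ) (g : Fin m → X),
    (∀ i, g i ∈ K) ∧ (∑ i, |c i|) ≤ 1 ∧ x = ∑ i, c i • g i}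

/-- Volume of the unit Euclidean ball in `ℝⁿ`. -/
noncomputable def unitBallVol (n : ℕ) : ℝ :=
  Real.pi ^ ((n : ℝ) / 2) / Real.Gamma ((n : ℝ) / 2 + 1)

/-- Span of the first `n` terms of a sequence. -/
noncomputable def spanFirst {X : Type*} [NormedAddCommGroup X] [NormedSpace ℝ X]
    (f : ℕ → X) (n : ℕ) : Submodule ℝ X :=
  Submodule.span ℝ (f '' {i | i < n})

/-- The weak greedy algorithm with parameter `γ`: `f n` (the `(n+1)`-st iterate) lies in `K`
and its distance to the span of the previous iterates is at least `γ` times that of any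
other element of `K`. -/
def IsWeakGreedy {X : Type*} [NormedAddCommGroup X] [NormedSpace ℝ X]
    (γ : ℝ) (K : Set X) (f : ℕ → X) : Prop :=
  ∀ n : ℕ, f n ∈ K ∧ ∀ g ∈ K,
    γ * Metric.infDist g (spanFirst f n : Set X) ≤ Metric.infDist (f n) (spanFirst f n : Set X)

/-- The greedy error `σ_n(K) = sup_{f ∈ K} dist(f, span{f_1,…,f_n})`. -/
noncomputable def greedyError {X : Type*} [NormedAddCommGroup X] [NormedSpace ℝ X]
    (K : Set X) (f : ℕ → X) (n : ℕ) : ℝ :=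
  sSup ((fun g => Metric.infDist g (spanFirst f n : Set X)) '' K)

/-- Kolmogorov `n`-width. -/
noncomputable def kolmogorovWidth {X : Type*} [NormedAddCommGroup X] [NormedSpace ℝ X]
    (n : ℕ) (K : Set X) : ℝ :=
  sInf {d : ℝ | ∃ Y : Submodule ℝ X, FiniteDimensional ℝ Y ∧ Module.finrank ℝ Y ≤ n ∧
    d = sSup ((fun g => Metric.infDist g (Y : Set X)) '' K)}

/-- `f` admits an `ℓ¹` representation over the dictionary `D`. -/
def HasL1Rep {X : Type*} [NormedAddCommGroup X] [NormedSpace ℝ X] (D : Set X) (f : X) : Prop :=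
  ∃ (c : ℕ → ℝ) (g : ℕ → X), (∀ i, g i ∈ D) ∧ Summable (fun i => |c i|) ∧
    HasSum (fun i => c i • g i) f

/-- The variation norm `‖f‖_{L₁(D)}`. -/
noncomputable def varNorm {X : Type*} [NormedAddCommGroup X] [NormedSpace ℝ X]
    (D : Set X) (f : X) : ℝ :=
  sInf {t : ℝ | ∃ (c : ℕ → ℝ) (g : ℕ → X), (∀ i, g i ∈ D) ∧ Summable (fun i => |c i|) ∧
    HasSum (fun i => c i • g i) f ∧ t = ∑' i, |c i|}

/-- The orthogonal greedy algorithm with target `f`: `fa 0 = 0`; at each step `g n ∈ D`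
maximizes `|⟨g, f - fa n⟩|` over `D`, and `fa (n+1)` is the orthogonal projection of `f`
onto `span{g 0, …, g n}`. -/
def IsOGA {X : Type*} [NormedAddCommGroup X] [InnerProductSpace ℝ X]
    (D : Set X) (f : X) (g fa : ℕ → X) : Prop :=
  fa 0 = 0 ∧ ∀ n : ℕ,
    g n ∈ D ∧ (∀ h ∈ D, |⟪h, f - fa n⟫| ≤ |⟪g n, f - fa n⟫|) ∧
    fa (n + 1) ∈ Submodule.span ℝ (g '' {i | i ≤ n}) ∧
    ∀ w ∈ Submodule.span ℝ (g '' {i | i ≤ n}), ⟪f - fa (n + 1), w⟫ = 0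

/-- Best `n`-term approximation error `E_n(f, D)`. -/
noncomputable def bestNTermError {X : Type*} [NormedAddCommGroup X] [NormedSpace ℝ X]
    (D : Set X) (n : ℕ) (f : X) : ℝ :=
  sInf {r : ℝ | ∃ (c : Fin n → ℝ) (g : Fin n → X), (∀ i, g i ∈ D) ∧ r = ‖f - ∑ i, c i • g i‖}

/-- The K-functional `K(t, g)` between `X` and `L₁(D)`. -/
noncomputable def Kfunctional {X : Type*} [NormedAddCommGroup X] [NormedSpace ℝ X]
    (D : Set X) (t : ℝ) (gg : X) : ℝ :=
  sInf {s : ℝ | ∃ h : X, HasL1Rep D h ∧ s = ‖gg - h‖ + t * varNorm D h}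

/-- The interpolation norm `‖g‖_θ = sup_{t > 0} t^{-θ} K(t, g)`. -/
noncomputable def interpNorm {X : Type*} [NormedAddCommGroup X] [NormedSpace ℝ X]
    (D : Set X) (θ : ℝ) (gg : X) : ℝ :=
  sSup ((fun t => t ^ (-θ) * Kfunctional D t gg) '' Set.Ioi (0 : ℝ))

/-! Put `qₖ = gramSchmidt ℝ g k`, the part of `gₖ` orthogonal to the earlier choices. The image of
the `n`-dimensional cross-polytope spanned by `g₀, …, gₙ₋₁` lies in `co(D)` and has volume
`(2ⁿ / n!) ∏ ‖qₖ‖`, so comparing it with `2ⁿ` balls of radius `ε` gives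
`∏ ‖qₖ‖ ≤ n! Vₙ εₙ(co(D))ⁿ`.

For any `h` in the variation space put `A = ‖f - h‖`, `M = ‖h‖_{L₁(D)}` and `bₖ = ‖f - fₖ‖`.
Duality and Cauchy–Schwarz give `bₖ (bₖ - A) ≤ M ‖qₖ‖ ‖fₖ₊₁ - fₖ‖`, and Pythagoras turns this into
`(bₖ - A)⁻² + (M ‖qₖ‖)⁻² ≤ (bₖ₊₁ - A)⁻²`. Summing up and applying the inequality between harmonic
and geometric means yields `bₙ ≤ A + M (∏ ‖qₖ‖)^{1/n} / √n`; the infimum over `h` is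
`K(t, f) ≤ t^θ ‖f‖_θ` with `t = (∏ ‖qₖ‖)^{1/n} / √n`. -/

open InnerProductSpace MeasureTheory Metric Set

section Volume

/-- The cross-polytope, i.e. the closed unit ball of the `ℓ¹` norm on `ι → ℝ`. -/
def crossPolytope (ι : Type*) [Fintype ι] : Set (ι → ℝ) :=
  {x | ∑ i, |x i| ≤ 1}

theorem unitBallVol_pos (n : ℕ) : 0 < unitBallVol n :=
  div_pos (Real.rpow_pos_of_pos Real.pi_pos _) (Real.Gamma_pos_of_pos (by positivity))

variable {ι : Type*} [Fintype ι]

theorem volume_crossPolytope :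
    volume (crossPolytope ι) =
      ENNReal.ofReal (2 ^ Fintype.card ι / (Fintype.card ι).factorial) := by
  rcases isEmpty_or_nonempty ι with _ | _
  · simp [crossPolytope, volume_pi]
  · simpa [crossPolytope, one_add_one_eq_two, Real.Gamma_nat_eq_factorial] using
      volume_sum_rpow_le ι (le_refl (1 : ℝ)) 1

theorem volume_euclideanClosedBall (x : EuclideanSpace ℝ ι) {r : ℝ} (hr : 0 ≤ r) :
    volume (closedBall x r) =
      ENNReal.ofReal (r ^ Fintype.card ι * unitBallVol (Fintype.card ι)) := by
  rcases isEmpty_or_nonempty ι with _ | _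
  · have hball : WithLp.toLp 2 ⁻¹' closedBall x r = (univ : Set (ι → ℝ)) :=
      eq_univ_of_forall fun y => by simp [Subsingleton.elim (WithLp.toLp 2 y) x, hr]
    rw [← (PiLp.volume_preserving_toLp ι).measure_preimage
      isClosed_closedBall.measurableSet.nullMeasurableSet, hball]
    simp [volume_pi, unitBallVol]
  · have hsqrt : √Real.pi ^ Fintype.card ι = Real.pi ^ ((Fintype.card ι : ℝ) / 2) := by
      rw [Real.sqrt_eq_rpow, ← Real.rpow_mul_natCast Real.pi_pos.le, one_div_mul_eq_div]
    rw [EuclideanSpace.volume_closedBall, ENNReal.ofReal_mul (by positivity),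
      ENNReal.ofReal_pow hr, unitBallVol, hsqrt]

theorem abs_det_mul_le_of_image_crossPolytope_subset {κ : Type*} [Fintype κ] [DecidableEq ι]
    (A : Matrix ι ι ℝ) {ε : ℝ} (hε : 0 ≤ ε) (c : κ → EuclideanSpace ℝ ι)
    (hcov : (fun x => WithLp.toLp 2 (A.mulVec x)) '' crossPolytope ι ⊆ ⋃ k, closedBall (c k) ε) :
    |A.det| * (2 ^ Fintype.card ι / (Fintype.card ι).factorial) ≤
      Fintype.card κ * (ε ^ Fintype.card ι * unitBallVol (Fintype.card ι)) := by
  have hsub : Matrix.toLin' A '' crossPolytope ι ⊆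
      ⋃ k, WithLp.toLp 2 ⁻¹' closedBall (c k) ε := by
    rw [← preimage_iUnion]
    rintro _ ⟨x, hx, rfl⟩
    exact hcov ⟨x, hx, rfl⟩
  have hball (k : κ) : volume ((WithLp.toLp 2 : (ι → ℝ) → _) ⁻¹' closedBall (c k) ε) =
      ENNReal.ofReal (ε ^ Fintype.card ι * unitBallVol (Fintype.card ι)) := by
    rw [(PiLp.volume_preserving_toLp ι).measure_preimage
      isClosed_closedBall.measurableSet.nullMeasurableSet, volume_euclideanClosedBall _ hε]
  have hvol := (measure_mono hsub).trans (measure_iUnion_le (μ := volume) _)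
  rw [Measure.addHaar_image_linearMap, LinearMap.det_toLin', volume_crossPolytope,
    ← ENNReal.ofReal_mul (abs_nonneg _), tsum_fintype, Finset.sum_congr rfl fun k _ => hball k,
    Finset.sum_const, Finset.card_univ, nsmul_eq_mul, ← ENNReal.ofReal_natCast,
    ← ENNReal.ofReal_mul (Nat.cast_nonneg _)] at hvol
  have hV := (unitBallVol_pos (Fintype.card ι)).le
  exact (ENNReal.ofReal_le_ofReal_iff (by positivity)).1 hvol

end Volume

section Recursion

theorem card_le_mul_sum_inv_of_prod_le_pow {ι : Type*} {s : Finset ι} {z : ι → ℝ} {r : ℝ}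
    (hz : ∀ i ∈ s, 0 < z i) (hr : 0 ≤ r) (hprod : ∏ i ∈ s, z i ≤ r ^ s.card) :
    s.card ≤ r * ∑ i ∈ s, (z i)⁻¹ := by
  rcases s.eq_empty_or_nonempty with rfl | hs
  · simp
  have hcard : (0 : ℝ) < s.card := by exact_mod_cast hs.card_pos
  have hmean := Real.harm_mean_le_geom_mean s hs (fun _ => 1) z (fun _ _ => one_pos)
    (by simpa using hcard) hz
  simp only [Finset.sum_const, nsmul_eq_mul, mul_one, one_div, Real.rpow_one] at hmean
  have hroot : (∏ i ∈ s, z i) ^ (s.card : ℝ)⁻¹ ≤ r := by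
    rwa [Real.rpow_inv_le_iff_of_pos (Finset.prod_nonneg fun i hi => (hz i hi).le) hr hcard,
      Real.rpow_natCast]
  have hsum : 0 < ∑ i ∈ s, (z i)⁻¹ := Finset.sum_pos (fun i hi => inv_pos.2 (hz i hi)) hs
  exact (div_le_iff₀ hsum).1 (hmean.trans hroot)

theorem inv_add_inv_le_inv_of_le_mul_one_sub {x x' w : ℝ} (hx : 0 < x) (hx' : 0 < x')
    (hw : 0 < w) (h : x' ≤ x * (1 - x / w)) : x⁻¹ + w⁻¹ ≤ x'⁻¹ := by
  have hinv : x' * (x⁻¹ + w⁻¹) ≤ 1 :=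
    calc x' * (x⁻¹ + w⁻¹) ≤ x * (1 - x / w) * (x⁻¹ + w⁻¹) := by gcongr
      _ = 1 - (x / w) ^ 2 := by field_simp; ring
      _ ≤ 1 := sub_le_self _ (sq_nonneg _)
  rwa [← one_div x', le_div_iff₀' hx']

theorem inv_sq_sub_add_inv_sq_le {A b b' d δ : ℝ} (hA : 0 ≤ A) (hb : 0 ≤ b) (hb' : A < b')
    (hd : 0 < d) (hpyth : b' ^ 2 + δ ^ 2 ≤ b ^ 2) (hdual : b * (b - A) ≤ d * δ) :
    ((b - A) ^ 2)⁻¹ + (d ^ 2)⁻¹ ≤ ((b' - A) ^ 2)⁻¹ := by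
  have hbb' : b' ≤ b := le_of_sq_le_sq (by linarith [sq_nonneg δ]) hb
  have hbA : 0 < b - A := by linarith
  have hb'A : 0 < b' - A := by linarith
  have hbpos : 0 < b := by linarith
  -- `x ↦ (x - A) / x` is increasing, so `b - A` shrinks at least as fast as `b`.
  have hcross : b * (b' - A) ≤ b' * (b - A) := by linarith [mul_le_mul_of_nonneg_left hbb' hA]
  have hδ : (b * (b - A) / d) ^ 2 ≤ δ ^ 2 := by
    gcongr
    exact (div_le_iff₀' hd).2 hdual
  refine inv_add_inv_le_inv_of_le_mul_one_sub (pow_pos hbA 2) (pow_pos hb'A 2) (pow_pos hd 2) ?_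
  refine le_of_mul_le_mul_left ?_ (pow_pos hbpos 2)
  calc b ^ 2 * (b' - A) ^ 2 = (b * (b' - A)) ^ 2 := by ring
    _ ≤ (b' * (b - A)) ^ 2 :=
      pow_le_pow_left₀ (mul_nonneg hb hb'A.le) hcross 2
    _ = b' ^ 2 * (b - A) ^ 2 := by ring
    _ ≤ (b ^ 2 - (b * (b - A) / d) ^ 2) * (b - A) ^ 2 := by gcongr; linarith
    _ = b ^ 2 * ((b - A) ^ 2 * (1 - (b - A) ^ 2 / d ^ 2)) := by ring

theorem pos_of_mul_sub_le_mul {A b d δ : ℝ} (hA : 0 ≤ A) (hb : A < b) (hd : 0 ≤ d)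
    (hdual : b * (b - A) ≤ d * δ) : 0 < d := by
  refine hd.lt_of_ne' fun hd0 => ?_
  rw [hd0, zero_mul] at hdual
  exact (mul_pos (hA.trans_lt hb) (sub_pos.2 hb)).not_ge hdual

theorem sum_inv_sq_le_inv_sq_sub {A : ℝ} {b d δ : ℕ → ℝ} {n : ℕ} (hA : 0 ≤ A)
    (hb : ∀ k ≤ n, A < b k) (hd : ∀ k < n, 0 < d k)
    (hpyth : ∀ k < n, b (k + 1) ^ 2 + δ k ^ 2 ≤ b k ^ 2)
    (hdual : ∀ k < n, b k * (b k - A) ≤ d k * δ k) :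
    ∑ k ∈ Finset.range n, (d k ^ 2)⁻¹ ≤ ((b n - A) ^ 2)⁻¹ := by
  induction n with
  | zero => rw [Finset.sum_range_zero]; positivity
  | succ n ih =>
    have hn := n.lt_succ_self
    have hstep := inv_sq_sub_add_inv_sq_le hA (hA.trans (hb n hn.le).le) (hb _ le_rfl) (hd n hn)
      (hpyth n hn) (hdual n hn)
    have hsum := ih (fun k hk => hb k (hk.trans hn.le)) (fun k hk => hd k (hk.trans hn))
      (fun k hk => hpyth k (hk.trans hn)) (fun k hk => hdual k (hk.trans hn))
    rw [Finset.sum_range_succ]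
    linarith

theorem sqrt_mul_sub_le_of_prod_le_pow {A ρ : ℝ} {b d δ : ℕ → ℝ} {n : ℕ} (hA : 0 ≤ A) (hρ : 0 ≤ ρ)
    (hb : ∀ k, 0 ≤ b k) (hd : ∀ k, 0 ≤ d k) (hpyth : ∀ k, b (k + 1) ^ 2 + δ k ^ 2 ≤ b k ^ 2)
    (hdual : ∀ k, b k * (b k - A) ≤ d k * δ k) (hprod : ∏ k ∈ Finset.range n, d k ≤ ρ ^ n) :
    √n * (b n - A) ≤ ρ := by
  rcases le_or_gt (b n) A with hbn | hbn
  · exact (mul_nonpos_of_nonneg_of_nonpos (Real.sqrt_nonneg _) (sub_nonpos.2 hbn)).trans hρ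
  have hanti : Antitone b := antitone_nat_of_succ_le fun k =>
    le_of_sq_le_sq (by linarith [hpyth k, sq_nonneg (δ k)]) (hb k)
  have hAb : ∀ k ≤ n, A < b k := fun k hk => hbn.trans_le (hanti hk)
  have hdpos : ∀ k < n, 0 < d k := fun k hk =>
    pos_of_mul_sub_le_mul hA (hAb k hk.le) (hd k) (hdual k)
  have hsum : ∑ k ∈ Finset.range n, (d k ^ 2)⁻¹ ≤ ((b n - A) ^ 2)⁻¹ :=
    sum_inv_sq_le_inv_sq_sub hA hAb hdpos (fun k _ => hpyth k) fun k _ => hdual k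
  have hprod_sq : ∏ k ∈ Finset.range n, d k ^ 2 ≤ (ρ ^ 2) ^ (Finset.range n).card := by
    rw [Finset.prod_pow, Finset.card_range, pow_right_comm]
    exact pow_le_pow_left₀ (Finset.prod_nonneg fun k _ => hd k) hprod 2
  have hmean := card_le_mul_sum_inv_of_prod_le_pow
    (fun k hk => pow_pos (hdpos k (Finset.mem_range.1 hk)) 2) (sq_nonneg ρ) hprod_sq
  rw [Finset.card_range] at hmean
  refine le_of_sq_le_sq ?_ hρ
  rw [mul_pow, Real.sq_sqrt n.cast_nonneg, ← le_div_iff₀ (pow_pos (sub_pos.2 hbn) 2),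
    div_eq_mul_inv]
  exact hmean.trans (mul_le_mul_of_nonneg_left hsum (sq_nonneg ρ))

end Recursion

theorem le_apply_entropyNumber {X : Type*} [NormedAddCommGroup X] {K : Set X}
    (hK : Bornology.IsBounded K) {n : ℕ} {a : ℝ} {φ : ℝ → ℝ} (hφ : Continuous φ)
    (hle : ∀ ε > 0, ∀ c : Fin (2 ^ n) → X, K ⊆ ⋃ i, closedBall (c i) ε → a ≤ φ ε) :
    a ≤ φ (entropyNumber n K) := by
  obtain ⟨R, hR, hKR⟩ := hK.subset_closedBall_lt 0 0
  have hcov : K ⊆ ⋃ _ : Fin (2 ^ n), closedBall (0 : X) R := by rwa [iUnion_const]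
  have hmem : entropyNumber n K ∈ closure {ε : ℝ | 0 < ε ∧ ∃ c : Fin (2 ^ n) → X,
      K ⊆ ⋃ i, closedBall (c i) ε} :=
    csInf_mem_closure ⟨R, hR, _, hcov⟩ ⟨0, fun ε hε => hε.1.le⟩
  refine closure_minimal ?_ (isClosed_le continuous_const hφ) hmem
  rintro ε ⟨hε, c, hc⟩
  exact hle ε hε c hc

theorem entropyNumber_nonneg {X : Type*} [NormedAddCommGroup X] (n : ℕ) (K : Set X) :
    0 ≤ entropyNumber n K :=
  Real.sInf_nonneg fun _ hε => hε.1.le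

section Dictionary

variable {X : Type*} [NormedAddCommGroup X] [NormedSpace ℝ X]

theorem sum_smul_mem_symConvexHull {ι : Type*} [Fintype ι] {D : Set X} {g : ι → X}
    (hg : ∀ i, g i ∈ D) {x : ι → ℝ} (hx : x ∈ crossPolytope ι) :
    ∑ i, x i • g i ∈ symConvexHull D := by
  let e := (Fintype.equivFin ι).symm
  refine subset_closure ⟨_, x ∘ e, g ∘ e, fun i => hg _, ?_, ?_⟩
  · simp only [Function.comp_apply, e.sum_comp fun i => |x i|]
    exact hx
  · simp only [Function.comp_apply, e.sum_comp fun i => x i • g i]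

theorem varNorm_nonneg (D : Set X) (h : X) : 0 ≤ varNorm D h := by
  refine Real.sInf_nonneg ?_
  rintro _ ⟨c, g, -, -, -, rfl⟩
  exact tsum_nonneg fun i => abs_nonneg _

theorem hasL1Rep_zero {D : Set X} (hD : D.Nonempty) : HasL1Rep D 0 :=
  hD.elim fun g hg => ⟨0, fun _ => g, fun _ => hg, by simp, by simp⟩

theorem Kfunctional_le {D : Set X} {t : ℝ} (ht : 0 ≤ t) (f : X) {h : X} (hh : HasL1Rep D h) :
    Kfunctional D t f ≤ ‖f - h‖ + t * varNorm D h := by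
  refine csInf_le ⟨0, ?_⟩ ⟨h, hh, rfl⟩
  rintro _ ⟨h', -, rfl⟩
  exact add_nonneg (norm_nonneg _) (mul_nonneg ht (varNorm_nonneg D h'))

theorem le_Kfunctional {D : Set X} (hD : D.Nonempty) {t a : ℝ} {f : X}
    (hle : ∀ h, HasL1Rep D h → a ≤ ‖f - h‖ + t * varNorm D h) : a ≤ Kfunctional D t f :=
  le_csInf ⟨_, 0, hasL1Rep_zero hD, rfl⟩ fun _ ⟨h, hh, hs⟩ => hs ▸ hle h hh

theorem Kfunctional_monotoneOn {D : Set X} (hD : D.Nonempty) (f : X) :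
    MonotoneOn (fun t => Kfunctional D t f) (Ici 0) := fun _ hs _ _ hst =>
  le_Kfunctional hD fun h hh => (Kfunctional_le hs f hh).trans <|
    add_le_add_right (mul_le_mul_of_nonneg_right hst (varNorm_nonneg D h)) _

theorem Kfunctional_le_rpow_mul_interpNorm {D : Set X} (hD : D.Nonempty) {θ : ℝ} (hθ : 0 ≤ θ)
    {f : X} (hf : BddAbove ((fun t => t ^ (-θ) * Kfunctional D t f) '' Ioi (0 : ℝ)))
    {t : ℝ} (ht : 0 ≤ t) : Kfunctional D t f ≤ t ^ θ * interpNorm D θ f := by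
  have hpos : ∀ s > 0, Kfunctional D s f ≤ s ^ θ * interpNorm D θ f := fun s hs => by
    have hle : s ^ (-θ) * Kfunctional D s f ≤ interpNorm D θ f := le_csSup hf ⟨s, hs, rfl⟩
    rwa [Real.rpow_neg hs.le, inv_mul_le_iff₀ (Real.rpow_pos_of_pos hs θ)] at hle
  have hlim : Filter.Tendsto (fun s => s ^ θ * interpNorm D θ f) (nhdsWithin t (Ioi t))
      (nhds (t ^ θ * interpNorm D θ f)) :=
    (((Real.continuous_rpow_const hθ).mul_const _).tendsto t).mono_left nhdsWithin_le_nhds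
  refine ge_of_tendsto hlim (eventually_mem_nhdsWithin.mono fun s hs => ?_)
  have hs0 : 0 < s := ht.trans_lt hs
  exact (Kfunctional_monotoneOn hD f ht hs0.le (le_of_lt hs)).trans (hpos s hs0)

end Dictionary

section InnerProductSpace

variable {X : Type*} [NormedAddCommGroup X] [InnerProductSpace ℝ X]

theorem inner_le_varNorm_mul {D : Set X} {h r : X} (hh : HasL1Rep D h) {G : ℝ}
    (hG : ∀ g ∈ D, |⟪g, r⟫| ≤ G) : ⟪h, r⟫ ≤ varNorm D h * G := by
  obtain ⟨c₀, g₀, hg₀, hc₀, hsum₀⟩ := hh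
  have hG0 : 0 ≤ G := (abs_nonneg _).trans (hG _ (hg₀ 0))
  rw [mul_comm, ← smul_eq_mul, varNorm, ← Real.sInf_smul_of_nonneg hG0]
  refine le_csInf (Set.Nonempty.smul_set ⟨_, c₀, g₀, hg₀, hc₀, hsum₀, rfl⟩) ?_
  rintro _ ⟨_, ⟨c, g, hg, hc, hsum, rfl⟩, rfl⟩
  refine hasSum_le (fun i => ?_) (hsum.mapL ((innerSL ℝ).flip r)) (hc.hasSum.mul_left G)
  calc ⟪c i • g i, r⟫ ≤ |c i| * |⟪g i, r⟫| := by
        rw [real_inner_smul_left, ← abs_mul]; exact le_abs_self _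
    _ ≤ G * |c i| := by rw [mul_comm G]; gcongr; exact hG _ (hg i)

section Projection

variable {ι : Type*} [Fintype ι]

theorem dist_toLp_inner_le_of_orthonormal {e : ι → X} (he : Orthonormal ℝ e) (x y : X) :
    dist (WithLp.toLp 2 fun i => ⟪e i, x⟫) (WithLp.toLp 2 fun i => ⟪e i, y⟫ : EuclideanSpace ℝ ι) ≤
      dist x y := by
  rw [EuclideanSpace.dist_eq, dist_eq_norm x y]
  refine Real.sqrt_le_iff.2 ⟨norm_nonneg _, ?_⟩
  simpa [inner_sub_right, Real.dist_eq] using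
    he.sum_inner_products_le (s := Finset.univ) (x := x - y)

theorem abs_det_inner_mul_le_of_image_crossPolytope_subset {κ : Type*} [Fintype κ] [DecidableEq ι]
    {e v : ι → X} (he : Orthonormal ℝ e) {ε : ℝ} (hε : 0 ≤ ε) (c : κ → X)
    (hcov : (fun x => ∑ i, x i • v i) '' crossPolytope ι ⊆ ⋃ k, closedBall (c k) ε) :
    |(Matrix.of fun i j => ⟪e i, v j⟫).det| *
        (2 ^ Fintype.card ι / (Fintype.card ι).factorial) ≤
      Fintype.card κ * (ε ^ Fintype.card ι * unitBallVol (Fintype.card ι)) := by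
  refine abs_det_mul_le_of_image_crossPolytope_subset _ hε
    (fun k => WithLp.toLp 2 fun i => ⟪e i, c k⟫) ?_
  rintro _ ⟨x, hx, rfl⟩
  obtain ⟨k, hk⟩ := mem_iUnion.1 (hcov ⟨x, hx, rfl⟩)
  have hcoord : (Matrix.of fun i j => ⟪e i, v j⟫).mulVec x = fun i => ⟪e i, ∑ j, x j • v j⟫ := by
    ext i
    simp [Matrix.mulVec, dotProduct, inner_sum, inner_smul_right, mul_comm]
  refine mem_iUnion.2 ⟨k, ?_⟩
  simp only [hcoord]
  exact (dist_toLp_inner_le_of_orthonormal he _ _).trans hk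

end Projection

section GramSchmidt

variable {ι : Type*} [LinearOrder ι] [LocallyFiniteOrderBot ι] [WellFoundedLT ι]

theorem sub_gramSchmidt_mem_span (g : ι → X) (k : ι) :
    g k - gramSchmidt ℝ g k ∈ Submodule.span ℝ (g '' Iio k) := by
  rw [gramSchmidt_def, sub_sub_cancel, ← span_gramSchmidt_Iio ℝ g k]
  refine Submodule.sum_mem _ fun i hi => ?_
  rw [Submodule.starProjection_singleton]
  exact Submodule.smul_mem _ _ (Submodule.subset_span ⟨i, Finset.mem_Iio.1 hi, rfl⟩)

theorem inner_gramSchmidt_self (g : ι → X) (k : ι) :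
    ⟪gramSchmidt ℝ g k, g k⟫ = ‖gramSchmidt ℝ g k‖ ^ 2 := by
  conv_lhs => rw [gramSchmidt_def'' ℝ g k]
  rw [inner_add_right, inner_sum, Finset.sum_eq_zero, real_inner_self_eq_norm_sq, add_zero]
  intro i hi
  rw [inner_smul_right, gramSchmidt_orthogonal ℝ g (Finset.mem_Iio.1 hi).ne', mul_zero]

theorem det_inner_gramSchmidtNormed (g : ι → X) (s : Finset ι) :
    (Matrix.of fun i j : s => ⟪gramSchmidtNormed ℝ g i, g j⟫).det =
      ∏ i ∈ s, ‖gramSchmidt ℝ g i‖ := by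
  have htri : (Matrix.of fun i j : s => ⟪gramSchmidtNormed ℝ g i, g j⟫).IsUpperTriangular :=
    fun i j hij => by
      simp [gramSchmidtNormed, inner_smul_left,
        gramSchmidt_inv_triangular ℝ g (show (j : ι) < i from hij)]
  rw [Matrix.det_of_isUpperTriangular htri, ← Finset.prod_coe_sort s]
  refine Finset.prod_congr rfl fun i _ => ?_
  simp [gramSchmidtNormed, inner_smul_left, inner_gramSchmidt_self, sq, ← mul_assoc]

theorem prod_norm_gramSchmidt_le_of_cover {D : Set X} {g : ι → X} {s : Finset ι}
    (hg : ∀ i ∈ s, g i ∈ D) {ε : ℝ} (hε : 0 ≤ ε) (c : Fin (2 ^ s.card) → X)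
    (hcov : symConvexHull D ⊆ ⋃ k, closedBall (c k) ε) :
    ∏ i ∈ s, ‖gramSchmidt ℝ g i‖ ≤ s.card.factorial * unitBallVol s.card * ε ^ s.card := by
  have hV := (unitBallVol_pos s.card).le
  by_cases hzero : ∃ i ∈ s, gramSchmidt ℝ g i = 0
  · obtain ⟨i, hi, hgi⟩ := hzero
    rw [Finset.prod_eq_zero hi (by rw [hgi, norm_zero])]
    positivity
  push Not at hzero
  have hne (i : s) : gramSchmidtNormed ℝ g i ≠ 0 := by
    simpa [gramSchmidtNormed] using hzero i i.2
  have horth : Orthonormal ℝ fun i : s => gramSchmidtNormed ℝ g i :=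
    (gramSchmidtNormed_orthonormal' g).comp (fun i : s => ⟨i, hne i⟩)
      fun i j hij => Subtype.ext (Subtype.mk.inj hij)
  have hsub : (fun x => ∑ i : s, x i • g i) '' crossPolytope s ⊆ symConvexHull D := by
    rintro _ ⟨x, hx, rfl⟩
    exact sum_smul_mem_symConvexHull (fun i : s => hg i i.2) hx
  have hvol := abs_det_inner_mul_le_of_image_crossPolytope_subset horth hε c (hsub.trans hcov)
  rw [det_inner_gramSchmidtNormed, abs_of_nonneg (Finset.prod_nonneg fun _ _ => norm_nonneg _),
    Fintype.card_coe, Fintype.card_fin, Nat.cast_pow, Nat.cast_ofNat, ← mul_div_assoc,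
    div_le_iff₀ (by positivity)] at hvol
  refine le_of_mul_le_mul_right (hvol.trans_eq ?_) (by positivity : (0 : ℝ) < 2 ^ s.card)
  ring

theorem prod_norm_gramSchmidt_le_entropyNumber {D : Set X}
    (hD : Bornology.IsBounded (symConvexHull D)) {g : ι → X} {s : Finset ι}
    (hg : ∀ i ∈ s, g i ∈ D) :
    ∏ i ∈ s, ‖gramSchmidt ℝ g i‖ ≤
      s.card.factorial * unitBallVol s.card * entropyNumber s.card (symConvexHull D) ^ s.card :=
  le_apply_entropyNumber hD (by fun_prop) fun _ hε c hc =>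
    prod_norm_gramSchmidt_le_of_cover hg (le_of_lt hε) c hc

end GramSchmidt

namespace IsOGA

variable {D : Set X} {f : X} {g fa : ℕ → X}

theorem mem_spanFirst (hoga : IsOGA D f g fa) (k : ℕ) : fa k ∈ spanFirst g k := by
  cases k with
  | zero => rw [hoga.1]; exact zero_mem _
  | succ k => simpa only [spanFirst, Nat.lt_succ_iff] using (hoga.2 k).2.2.1

theorem inner_residual_eq_zero (hoga : IsOGA D f g fa) {k : ℕ} {w : X} (hw : w ∈ spanFirst g k) :
    ⟪f - fa k, w⟫ = 0 := by
  cases k with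
  | zero =>
    have hw0 : w = 0 := by simpa [spanFirst] using hw
    rw [hw0, inner_zero_right]
  | succ k => exact (hoga.2 k).2.2.2 w (by simpa only [spanFirst, Nat.lt_succ_iff] using hw)

theorem norm_sq_residual_succ_add (hoga : IsOGA D f g fa) (k : ℕ) :
    ‖f - fa (k + 1)‖ ^ 2 + ‖fa (k + 1) - fa k‖ ^ 2 = ‖f - fa k‖ ^ 2 := by
  have hle : spanFirst g k ≤ spanFirst g (k + 1) :=
    Submodule.span_mono (image_mono fun _ => Nat.lt_succ_of_lt)
  have horth : ⟪f - fa (k + 1), fa (k + 1) - fa k⟫ = 0 := hoga.inner_residual_eq_zero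
    (sub_mem (hoga.mem_spanFirst (k + 1)) (hle (hoga.mem_spanFirst k)))
  rw [← sub_add_sub_cancel f (fa (k + 1)) (fa k), norm_add_sq_real, horth]
  ring

theorem inner_residual_eq_inner_gramSchmidt (hoga : IsOGA D f g fa) (k : ℕ) :
    ⟪g k, f - fa k⟫ = ⟪gramSchmidt ℝ g k, fa (k + 1) - fa k⟫ := by
  have hnext : gramSchmidt ℝ g k ∈ spanFirst g (k + 1) := by
    simpa only [spanFirst, Nat.lt_succ_iff] using! gramSchmidt_mem_span ℝ g (le_refl k)
  have hpart := hoga.inner_residual_eq_zero (sub_gramSchmidt_mem_span g k)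
  rw [inner_sub_right, sub_eq_zero] at hpart
  rw [real_inner_comm, hpart, ← sub_add_sub_cancel f (fa (k + 1)) (fa k), inner_add_left,
    hoga.inner_residual_eq_zero hnext, zero_add, real_inner_comm]

theorem norm_residual_mul_sub_le (hoga : IsOGA D f g fa) {h : X} (hh : HasL1Rep D h) (k : ℕ) :
    ‖f - fa k‖ * (‖f - fa k‖ - ‖f - h‖) ≤
      varNorm D h * ‖gramSchmidt ℝ g k‖ * ‖fa (k + 1) - fa k‖ := by
  have hself : ‖f - fa k‖ ^ 2 = ⟪f - fa k, f - h⟫ + ⟪h, f - fa k⟫ := by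
    rw [real_inner_comm (f - fa k) h, ← inner_add_right, sub_add_cancel,
      ← real_inner_self_eq_norm_sq, inner_sub_right,
      hoga.inner_residual_eq_zero (hoga.mem_spanFirst k), sub_zero]
  have hgreedy : |⟪g k, f - fa k⟫| ≤ ‖gramSchmidt ℝ g k‖ * ‖fa (k + 1) - fa k‖ := by
    rw [hoga.inner_residual_eq_inner_gramSchmidt k]
    exact abs_real_inner_le_norm _ _
  have hdual := (inner_le_varNorm_mul hh (hoga.2 k).2.1).trans
    (mul_le_mul_of_nonneg_left hgreedy (varNorm_nonneg D h))
  linarith [real_inner_le_norm (f - fa k) (f - h)]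

theorem norm_residual_le_Kfunctional (hoga : IsOGA D f g fa) {n : ℕ} (hn : n ≠ 0) {ρ : ℝ}
    (hρ : 0 ≤ ρ) (hprod : ∏ k ∈ Finset.range n, ‖gramSchmidt ℝ g k‖ ≤ ρ ^ n) :
    ‖f - fa n‖ ≤ Kfunctional D (ρ / √n) f := by
  refine le_Kfunctional ⟨g 0, (hoga.2 0).1⟩ fun h hh => ?_
  have hM := varNorm_nonneg D h
  have hprod' : ∏ k ∈ Finset.range n, varNorm D h * ‖gramSchmidt ℝ g k‖ ≤
      (varNorm D h * ρ) ^ n := by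
    rw [Finset.prod_mul_distrib, Finset.prod_const, Finset.card_range, mul_pow]
    gcongr
  have hsqrt := sqrt_mul_sub_le_of_prod_le_pow (b := fun k => ‖f - fa k‖) (norm_nonneg _)
    (by positivity) (fun _ => norm_nonneg _) (fun _ => by positivity)
    (fun k => (hoga.norm_sq_residual_succ_add k).le) (hoga.norm_residual_mul_sub_le hh) hprod'
  have hn' : 0 < √(n : ℝ) := by positivity
  rwa [← le_div_iff₀' hn', sub_le_iff_le_add', mul_comm (varNorm D h),
    ← div_mul_eq_mul_div] at hsqrt

theorem norm_residual_le_Kfunctional_entropyNumber (hoga : IsOGA D f g fa)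
    (hD : Bornology.IsBounded (symConvexHull D)) {n : ℕ} (hn : n ≠ 0) :
    ‖f - fa n‖ ≤ Kfunctional D
      ((n.factorial * unitBallVol n) ^ (n : ℝ)⁻¹ * entropyNumber n (symConvexHull D) / √n) f := by
  have hV := unitBallVol_pos n
  have hε := entropyNumber_nonneg n (symConvexHull D)
  refine hoga.norm_residual_le_Kfunctional hn (by positivity) ?_
  rw [mul_pow, Real.rpow_inv_natCast_pow (by positivity) hn]
  simpa only [Finset.card_range] using
    prod_norm_gramSchmidt_le_entropyNumber (s := Finset.range n) hD fun i _ => (hoga.2 i).1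

end IsOGA

end InnerProductSpace

theorem oga_error_le_interpNorm_entropy_general
    {X : Type*} [NormedAddCommGroup X] [InnerProductSpace ℝ X]
    {D : Set X} (hD : Bornology.IsBounded (symConvexHull D))
    {θ : ℝ} (hθ : 0 ≤ θ) {f : X}
    (hfbdd : BddAbove ((fun t => t ^ (-θ) * Kfunctional D t f) '' Ioi (0 : ℝ)))
    {g fa : ℕ → X} (hoga : IsOGA D f g fa) {n : ℕ} (hn : n ≠ 0) :
    ‖f - fa n‖
      ≤ (n.factorial * unitBallVol n) ^ (θ / n) / (n : ℝ) ^ (θ / 2) *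
          interpNorm D θ f * entropyNumber n (symConvexHull D) ^ θ := by
  have hV := unitBallVol_pos n
  have hε := entropyNumber_nonneg n (symConvexHull D)
  refine (hoga.norm_residual_le_Kfunctional_entropyNumber hD hn).trans <|
    (Kfunctional_le_rpow_mul_interpNorm ⟨g 0, (hoga.2 0).1⟩ hθ hfbdd (by positivity)).trans_eq ?_
  rw [Real.div_rpow (by positivity) (by positivity), Real.mul_rpow (by positivity) hε,
    ← Real.rpow_mul (by positivity), Real.sqrt_eq_rpow, ← Real.rpow_mul (by positivity),
    inv_mul_eq_div, one_div_mul_eq_div]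
  ring

/-- OGA error bound for targets in the interpolation space
`[X, L₁(D)]_{θ,∞}` (Proposition 4.1 of the paper). -/
theorem oga_error_le_interpNorm_entropy
    {X : Type*} [NormedAddCommGroup X] [InnerProductSpace ℝ X] [CompleteSpace X]
    (D : Set X) (hD : IsCompact (symConvexHull D))
    (θ : ℝ) (hθ : θ ∈ Set.Ioo (0 : ℝ) 1) (f : X)
    (hfbdd : BddAbove ((fun t => t ^ (-θ) * Kfunctional D t f) '' Set.Ioi (0 : ℝ)))
    (g fa : ℕ → X) (hoga : IsOGA D f g fa) (n : ℕ) (hn : 1 ≤ n) :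
    ‖f - fa n‖
      ≤ 2 ^ θ * (((n.factorial : ℝ) * unitBallVol n) ^ (θ / n) / (n : ℝ) ^ (θ / 2)) *
          interpNorm D θ f * entropyNumber n (symConvexHull D) ^ θ := by
  have hle := oga_error_le_interpNorm_entropy_general hD.isBounded hθ.1.le hfbdd hoga
    (Nat.one_le_iff_ne_zero.1 hn)
  refine (hle.trans (le_mul_of_one_le_left ((norm_nonneg _).trans hle)
    (Real.one_le_rpow one_le_two hθ.1.le))).trans_eq ?_
  ring
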